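/- arXiv:1401.1896 — 5 statements merged into one kernel-verified Lean document; each statement's English description precedes it below -/
import Mathlib

section
/- Let X be a compact metric space, T : X → X continuous, and Φ = (φ_n)_{n≥1} almost additive on (X,T) with values in ℝ^d (each coordinate sequence almost additive). If (μ_k)_{k≥1} is a sequence in M(X,T) converging in the weak-* topology to a measure μ ∈ M(X,T), then lim_{k→∞} Φ_*(μ_k) = Φ_*(μ); that is, lim_{k→∞} lim_{m→∞} (1/m) ∫ φ_m dμ_k = lim_{m→∞} (1/m) ∫ φ_m dμ. -/
/-!
For an invariant probability measure `ν` and a coordinate `j`, the numbers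
`a n = ∫ φ n · j ∂ν` satisfy `|a (n + p) - a n - a p| ≤ C`, with the constant `C` of almost
additivity, which does not depend on `ν` (`abs_integral_add_sub_le`). Summing along multiples of `n`
gives `|a n - n * l| ≤ C`, where `l = lim a m / m` (`abs_sub_mul_le_of_almost_additive`). So
`ν ↦ (1 / n) ∫ φ n · j ∂ν`, which is weak-* continuous, converges to `ν ↦ Φ_*(ν) j` uniformly over
invariant measures at rate `C / n`, and a uniform limit of continuous functions is continuous.
-/

open MeasureTheory Filter Topology

/-- A real sequence that is additive up to `C` stays within `C` of the linear sequence given by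
its asymptotic slope. -/
lemma abs_sub_mul_le_of_almost_additive {a : ℕ → ℝ} {C l : ℝ} (hC : 0 ≤ C)
    (ha : ∀ n p : ℕ, 1 ≤ n → 1 ≤ p → |a (n + p) - a n - a p| ≤ C)
    (hl : Tendsto (fun m : ℕ => (1 / (m : ℝ)) * a m) atTop (𝓝 l)) {n : ℕ} (hn : 1 ≤ n) :
    |a n - n * l| ≤ C := by
  have hmul : ∀ k : ℕ, |a ((k + 1) * n) - (k + 1) * a n| ≤ (k + 1) * C := by
    intro k
    induction k with
    | zero => simpa using hC
    | succ k ih =>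
      have h := ha ((k + 1) * n) n (Nat.mul_pos k.succ_pos hn) hn
      rw [show (k + 1) * n + n = (k + 1 + 1) * n by ring] at h
      rw [abs_le] at h ih ⊢
      push_cast
      constructor <;> linarith [h.1, h.2, ih.1, ih.2]
  have hn0 : (0 : ℝ) < n := by exact_mod_cast hn
  have hsub : Tendsto (fun k : ℕ => (k + 1) * n) atTop atTop :=
    tendsto_atTop_mono (fun k => (Nat.le_succ k).trans (Nat.le_mul_of_pos_right _ hn)) tendsto_id
  have hlim : Tendsto (fun k : ℕ =>
      |a n - n * ((1 / (((k + 1) * n : ℕ) : ℝ)) * a ((k + 1) * n))|) atTop (𝓝 |a n - n * l|) :=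
    (tendsto_const_nhds.sub ((hl.comp hsub).const_mul (n : ℝ))).abs
  refine le_of_tendsto' hlim fun k => ?_
  have hk : (0 : ℝ) < k + 1 := by positivity
  have heq : a n - n * ((1 / (((k + 1) * n : ℕ) : ℝ)) * a ((k + 1) * n))
      = -((a ((k + 1) * n) - (k + 1) * a n) / (k + 1)) := by
    push_cast
    field_simp
    ring
  rw [heq, abs_neg, abs_div, abs_of_pos hk, div_le_iff₀ hk, mul_comm C]
  exact hmul k

lemma abs_integral_add_sub_le {X : Type*} [MetricSpace X] [CompactSpace X] [MeasurableSpace X]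
    [BorelSpace X] {T : X → X} (hT : Continuous T) {f : ℕ → X → ℝ}
    (hf : ∀ n, 1 ≤ n → Continuous (f n)) {C : ℝ}
    (haa : ∀ n p : ℕ, 1 ≤ n → 1 ≤ p → ∀ x : X,
      -C + f n x + f p (T^[n] x) ≤ f (n + p) x ∧ f (n + p) x ≤ f n x + f p (T^[n] x) + C)
    (ν : ProbabilityMeasure X) (hν : Measure.map T (ν : Measure X) = (ν : Measure X))
    {n p : ℕ} (hn : 1 ≤ n) (hp : 1 ≤ p) :
    |∫ x, f (n + p) x ∂(ν : Measure X) - ∫ x, f n x ∂(ν : Measure X)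
      - ∫ x, f p x ∂(ν : Measure X)| ≤ C := by
  have hint : ∀ {g : X → ℝ}, Continuous g → Integrable g (ν : Measure X) := fun hg =>
    hg.integrable_of_hasCompactSupport (HasCompactSupport.of_compactSpace _)
  have hTn : Continuous (T^[n]) := hT.iterate n
  have hmp : MeasurePreserving (T^[n]) (ν : Measure X) (ν : Measure X) :=
    MeasurePreserving.iterate ⟨hT.measurable, hν⟩ n
  have hinv : ∫ x, f p (T^[n] x) ∂(ν : Measure X) = ∫ x, f p x ∂(ν : Measure X) := by
    have h := integral_map (μ := (ν : Measure X)) hTn.measurable.aemeasurable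
      (hf p hp).aestronglyMeasurable
    rw [hmp.map_eq] at h
    exact h.symm
  have hp' : Integrable (fun x => f p (T^[n] x)) (ν : Measure X) := hint ((hf p hp).comp hTn)
  have hn' := hint (hf n hn)
  have hnp := hint (hf (n + p) (by omega))
  have hdiff : Integrable (fun x => f (n + p) x - f n x) (ν : Measure X) := hnp.sub hn'
  rw [← hinv, ← integral_sub hnp hn', ← integral_sub hdiff hp', ← Real.norm_eq_abs]
  refine (norm_integral_le_of_norm_le_const (C := C) (Eventually.of_forall fun x => ?_)).trans
    (by simp)
  rw [Real.norm_eq_abs, abs_le]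
  have h := haa n p hn hp x
  constructor <;> linarith [h.1, h.2]

/-- For an `ℝ^d`-valued almost additive sequence `Φ` on a compact metric
space `(X,T)`, the map `μ ↦ Φ_*(μ)` is continuous on `M(X,T)` in the weak-* topology:
if invariant probability measures `μ_k → μ` weakly, then `Φ_*(μ_k) → Φ_*(μ)`. -/
theorem almost_additive_weak_star_continuous
    {X : Type*} [MetricSpace X] [CompactSpace X] [MeasurableSpace X] [BorelSpace X]
    (T : X → X) (hT : Continuous T)
    (d : ℕ) (φ : ℕ → X → Fin d → ℝ) (hφcont : ∀ n, 1 ≤ n → Continuous (φ n))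
    (haa : ∀ j : Fin d, ∃ C : ℝ, 0 < C ∧ ∀ n p : ℕ, 1 ≤ n → 1 ≤ p → ∀ x : X,
      -C + φ n x j + φ p (T^[n] x) j ≤ φ (n + p) x j ∧
        φ (n + p) x j ≤ φ n x j + φ p (T^[n] x) j + C)
    (μk : ℕ → ProbabilityMeasure X) (μ : ProbabilityMeasure X)
    (hinvk : ∀ k, Measure.map T (μk k : Measure X) = (μk k : Measure X))
    (hinv : Measure.map T (μ : Measure X) = (μ : Measure X))
    (hweak : Tendsto μk atTop (𝓝 μ))
    (Lk : ℕ → Fin d → ℝ) (L : Fin d → ℝ)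
    (hLk : ∀ k, Tendsto
      (fun m : ℕ => (1 / (m : ℝ)) • ∫ x, φ m x ∂(μk k : Measure X)) atTop (𝓝 (Lk k)))
    (hL : Tendsto
      (fun m : ℕ => (1 / (m : ℝ)) • ∫ x, φ m x ∂(μ : Measure X)) atTop (𝓝 L)) :
    Tendsto Lk atTop (𝓝 L) := by
  rw [tendsto_pi_nhds]
  intro j
  obtain ⟨C, hC, haaj⟩ := haa j
  have hcont : ∀ n, 1 ≤ n → Continuous fun x => φ n x j := fun n hn =>
    (continuous_apply j).comp (hφcont n hn)
  have hbound : ∀ (ν : ProbabilityMeasure X) (l : Fin d → ℝ),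
      Measure.map T (ν : Measure X) = (ν : Measure X) →
      Tendsto (fun m : ℕ => (1 / (m : ℝ)) • ∫ x, φ m x ∂(ν : Measure X)) atTop (𝓝 l) →
      ∀ n, 1 ≤ n → |∫ x, φ n x j ∂(ν : Measure X) - n * l j| ≤ C := by
    intro ν l hν hl n hn
    refine abs_sub_mul_le_of_almost_additive (a := fun m => ∫ x, φ m x j ∂(ν : Measure X)) hC.le
      (fun n p hn hp => abs_integral_add_sub_le hT hcont haaj ν hν hn hp) ?_ hn
    -- `φ 0` need not be integrable, so integral and evaluation are exchanged only for `m ≥ 1`.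
    refine (tendsto_pi_nhds.1 hl j).congr' ?_
    filter_upwards [eventually_ge_atTop 1] with m hm
    rw [Pi.smul_apply, smul_eq_mul, eval_integral]
    exact fun i => ((continuous_apply i).comp (hφcont m hm)).integrable_of_hasCompactSupport
      (HasCompactSupport.of_compactSpace _)
  rw [Metric.tendsto_nhds]
  intro ε hε
  -- `n` is chosen with `2 * C + 1 < n * ε`: two errors `C`, and `1` for the weak-* convergence.
  obtain ⟨n, hnε⟩ := exists_nat_gt ((2 * C + 1) / ε)
  have hn0 : (0 : ℝ) < n := lt_trans (by positivity) hnε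
  have hn : 1 ≤ n := by exact_mod_cast hn0
  rw [div_lt_iff₀ hε] at hnε
  have hconv := ProbabilityMeasure.tendsto_iff_forall_integral_tendsto.1 hweak
    (BoundedContinuousFunction.mkOfCompact ⟨fun x => φ n x j, hcont n hn⟩)
  simp only [BoundedContinuousFunction.mkOfCompact_apply, ContinuousMap.coe_mk] at hconv
  filter_upwards [Metric.tendsto_nhds.1 hconv 1 one_pos] with k hk
  have h1 := hbound (μk k) (Lk k) (hinvk k) (hLk k) n hn
  have h2 := hbound μ L hinv hL n hn
  rw [Real.dist_eq, abs_lt] at hk ⊢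
  rw [abs_le] at h1 h2
  constructor
  · refine lt_of_mul_lt_mul_left ?_ hn0.le
    linarith [h1.1, h1.2, h2.1, h2.2, hk.1, hk.2]
  · refine lt_of_mul_lt_mul_left ?_ hn0.le
    linarith [h1.1, h1.2, h2.1, h2.2, hk.1, hk.2]
end

section
/- Let X be a nonempty compact metric space, T : X → X continuous, and Φ = (φ_n)_{n≥1} almost additive on (X,T) with values in ℝ^d. Then the set L_Φ := {Φ_*(μ) : μ ∈ M(X,T)} ⊆ ℝ^d is compact and convex. -/
/-!
Write `a_n(μ) = ∫ φ_n dμ`. For an invariant probability measure `μ`, almost additivity integrates to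
`‖a_{n+p}(μ) - a_n(μ) - a_p(μ)‖ ≤ C` with one constant `C` for all `μ`. Comparing both `a_n / n` and
`a_m / m` with `a_{nm} / (nm)` gives `‖a_n(μ)/n - a_m(μ)/m‖ ≤ C/n + C/m`
(`norm_div_sub_div_le_of_quasi_additive`), so the averages `μ ↦ a_n(μ)/n` are uniformly Cauchy on the
set of invariant measures. Each average is continuous for the weak topology, hence so is the limit
`Φ_*`. The invariant measures form a closed subset of the compact space of probability measures on
`X`, so the image of `Φ_*` is compact. It is convex because the invariant probability measures form a
convex set on which `Φ_*` is affine.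
-/

open MeasureTheory Filter Topology


/-- Iterating the quasi-additivity bound along multiples of `n`. -/
lemma norm_mul_sub_smul_le_of_quasi_additive {E : Type*} [NormedAddCommGroup E] [NormedSpace ℝ E]
    {a : ℕ → E} {C : ℝ} (h : ∀ n p, 1 ≤ n → 1 ≤ p → ‖a (n + p) - a n - a p‖ ≤ C)
    {n : ℕ} (hn : 1 ≤ n) {m : ℕ} (hm : 1 ≤ m) : ‖a (m * n) - (m : ℝ) • a n‖ ≤ m * C := by
  have hC : 0 ≤ C := (norm_nonneg _).trans (h 1 1 le_rfl le_rfl)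
  induction m, hm using Nat.le_induction with
  | base => simpa using hC
  | succ m hm ih =>
    have h1 := h (m * n) n (Nat.mul_pos hm hn) hn
    have e : a ((m + 1) * n) - ((m + 1 : ℕ) : ℝ) • a n
        = (a (m * n + n) - a (m * n) - a n) + (a (m * n) - (m : ℝ) • a n) := by
      rw [Nat.succ_mul]
      push_cast
      rw [add_smul, one_smul]
      abel
    rw [e]
    refine (norm_add_le _ _).trans ?_
    push_cast
    linarith

lemma norm_div_sub_div_le_of_quasi_additive {E : Type*} [NormedAddCommGroup E] [NormedSpace ℝ E]
    {a : ℕ → E} {C : ℝ} (h : ∀ n p, 1 ≤ n → 1 ≤ p → ‖a (n + p) - a n - a p‖ ≤ C)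
    {n m : ℕ} (hn : 1 ≤ n) (hm : 1 ≤ m) :
    ‖(1 / (n : ℝ)) • a n - (1 / (m : ℝ)) • a m‖ ≤ C / n + C / m := by
  have key : ∀ {n m : ℕ}, 1 ≤ n → 1 ≤ m →
      ‖(1 / ((m * n : ℕ) : ℝ)) • a (m * n) - (1 / (n : ℝ)) • a n‖ ≤ C / n := by
    intro n m hn hm
    have hn' : (0 : ℝ) < n := by exact_mod_cast hn
    have hm' : (0 : ℝ) < m := by exact_mod_cast hm
    have e : (1 / ((m * n : ℕ) : ℝ)) • a (m * n) - (1 / (n : ℝ)) • a n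
        = (1 / ((m * n : ℕ) : ℝ)) • (a (m * n) - (m : ℝ) • a n) := by
      rw [smul_sub, smul_smul]
      congr 2
      push_cast
      field_simp
    rw [e, norm_smul, Real.norm_of_nonneg (by positivity)]
    calc _ ≤ (1 / ((m * n : ℕ) : ℝ)) * (m * C) := by
            gcongr
            exact norm_mul_sub_smul_le_of_quasi_additive h hn hm
      _ = C / n := by
            push_cast
            field_simp
  have h1 := key hn hm
  have h2 := key hm hn
  rw [mul_comm n m] at h2
  rw [norm_sub_rev] at h1
  exact (norm_sub_le_norm_sub_add_norm_sub _ _ _).trans (add_le_add h1 h2)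

/-- Almost additivity in norm form: the coordinatewise constants are replaced by a single one. -/
lemma exists_norm_bound_of_almost_additive {X : Type*} {T : X → X} {d : ℕ}
    {φ : ℕ → X → Fin d → ℝ}
    (haa : ∀ j : Fin d, ∃ C : ℝ, 0 < C ∧ ∀ n p : ℕ, 1 ≤ n → 1 ≤ p → ∀ x : X,
      -C + φ n x j + φ p (T^[n] x) j ≤ φ (n + p) x j ∧
        φ (n + p) x j ≤ φ n x j + φ p (T^[n] x) j + C) :
    ∃ C : ℝ, ∀ n p : ℕ, 1 ≤ n → 1 ≤ p → ∀ x : X,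
      ‖φ (n + p) x - φ n x - φ p (T^[n] x)‖ ≤ C := by
  choose C hC h using haa
  refine ⟨∑ j, C j, fun n p hn hp x => ?_⟩
  refine (pi_norm_le_iff_of_nonneg (Finset.sum_nonneg fun j _ => (hC j).le)).2 fun j => ?_
  have hj : C j ≤ ∑ j, C j :=
    Finset.single_le_sum (f := C) (fun j _ => (hC j).le) (Finset.mem_univ j)
  have := h j n p hn hp x
  rw [Real.norm_eq_abs, abs_le]
  simp only [Pi.sub_apply]
  constructor <;> linarith [this.1, this.2]

/-- For an invariant probability measure the integrals of an almost additive sequence are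
quasi-additive, with a constant independent of the measure. -/
lemma norm_integral_quasi_additive {X : Type*} [TopologicalSpace X] [CompactSpace X]
    [MeasurableSpace X] [BorelSpace X] {T : X → X} (hT : Continuous T) {d : ℕ}
    {φ : ℕ → X → Fin d → ℝ} (hφcont : ∀ n, 1 ≤ n → Continuous (φ n)) {C : ℝ}
    (hC : ∀ n p : ℕ, 1 ≤ n → 1 ≤ p → ∀ x : X, ‖φ (n + p) x - φ n x - φ p (T^[n] x)‖ ≤ C)
    {μ : Measure X} [IsProbabilityMeasure μ] (hμ : Measure.map T μ = μ)
    (n p : ℕ) (hn : 1 ≤ n) (hp : 1 ≤ p) :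
    ‖∫ x, φ (n + p) x ∂μ - ∫ x, φ n x ∂μ - ∫ x, φ p x ∂μ‖ ≤ C := by
  have hint : ∀ {f : X → Fin d → ℝ}, Continuous f → Integrable f μ := fun hf =>
    hf.integrable_of_hasCompactSupport (HasCompactSupport.of_compactSpace _)
  have hmp : MeasurePreserving (T^[n]) μ μ :=
    MeasurePreserving.iterate ⟨hT.measurable, hμ⟩ n
  have hcomp : ∫ x, φ p x ∂μ = ∫ x, φ p (T^[n] x) ∂μ := by
    conv_lhs => rw [← hmp.map_eq]
    exact integral_map hmp.measurable.aemeasurable (hφcont p hp).aestronglyMeasurable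
  have h1 := hint (hφcont (n + p) (by omega))
  have h2 := hint (hφcont n hn)
  have h3 := hint ((hφcont p hp).comp (hT.iterate n))
  have e : ∫ x, φ (n + p) x ∂μ - ∫ x, φ n x ∂μ - ∫ x, φ p x ∂μ
      = ∫ x, (φ (n + p) x - φ n x - φ p (T^[n] x)) ∂μ := by
    rw [hcomp, ← integral_sub h1 h2]
    exact (integral_sub (h1.sub h2) h3).symm
  rw [e]
  simpa using norm_integral_le_of_norm_le_const (μ := μ)
    (Filter.Eventually.of_forall (hC n p hn hp))

/-- Weak continuity of the integral of a vector-valued continuous function. -/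
lemma continuous_integral_pi {X : Type*} [TopologicalSpace X] [CompactSpace X]
    [MeasurableSpace X] [BorelSpace X] {d : ℕ} {f : X → Fin d → ℝ} (hf : Continuous f) :
    Continuous fun μ : ProbabilityMeasure X => ∫ x, f x ∂(μ : Measure X) := by
  refine continuous_pi fun j => ?_
  have hj : Continuous fun x => f x j := (continuous_apply j).comp hf
  have e : (fun μ : ProbabilityMeasure X => (∫ x, f x ∂(μ : Measure X)) j)
      = fun μ : ProbabilityMeasure X => ∫ x, f x j ∂(μ : Measure X) := by
    funext μ
    refine eval_integral (f := f) (fun i => ?_) j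
    exact ((continuous_apply i).comp hf).integrable_of_hasCompactSupport
      (HasCompactSupport.of_compactSpace _)
  rw [e]
  exact ProbabilityMeasure.continuous_integral_continuousMap (⟨_, hj⟩ : C(X, ℝ))

/-- For an `ℝ^d`-valued almost additive sequence `Φ` on a nonempty compact
metric space `(X,T)`, the set `L_Φ = {Φ_*(μ) : μ ∈ M(X,T)}` is compact and convex. -/
theorem almost_additive_level_set_compact_convex
    {X : Type*} [MetricSpace X] [CompactSpace X] [Nonempty X]
    [MeasurableSpace X] [BorelSpace X]
    (T : X → X) (hT : Continuous T)
    (d : ℕ) (φ : ℕ → X → Fin d → ℝ) (hφcont : ∀ n, 1 ≤ n → Continuous (φ n))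
    (haa : ∀ j : Fin d, ∃ C : ℝ, 0 < C ∧ ∀ n p : ℕ, 1 ≤ n → 1 ≤ p → ∀ x : X,
      -C + φ n x j + φ p (T^[n] x) j ≤ φ (n + p) x j ∧
        φ (n + p) x j ≤ φ n x j + φ p (T^[n] x) j + C) :
    IsCompact {α : Fin d → ℝ | ∃ μ : Measure X, IsProbabilityMeasure μ ∧
        Measure.map T μ = μ ∧
        Tendsto (fun n : ℕ => (1 / (n : ℝ)) • ∫ x, φ n x ∂μ) atTop (𝓝 α)} ∧
    Convex ℝ {α : Fin d → ℝ | ∃ μ : Measure X, IsProbabilityMeasure μ ∧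
        Measure.map T μ = μ ∧
        Tendsto (fun n : ℕ => (1 / (n : ℝ)) • ∫ x, φ n x ∂μ) atTop (𝓝 α)} := by
  obtain ⟨C, hC⟩ := exists_norm_bound_of_almost_additive haa
  constructor
  · set K : Set (ProbabilityMeasure X) := {μ | Measure.map T (μ : Measure X) = μ} with hK
    set F : ℕ → ProbabilityMeasure X → Fin d → ℝ :=
      fun n μ => (1 / (n : ℝ)) • ∫ x, φ n x ∂(μ : Measure X) with hF
    have hKc : IsCompact K := by
      refine IsClosed.isCompact ?_
      have e : K = {μ : ProbabilityMeasure X | μ.map hT.aemeasurable = μ} := by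
        ext μ
        exact ⟨fun h => ProbabilityMeasure.toMeasure_injective h, fun h =>
          congrArg (fun ν : ProbabilityMeasure X => (ν : Measure X)) h⟩
      rw [e]
      exact isClosed_eq (ProbabilityMeasure.continuous_map hT) continuous_id
    have hbound : ∀ μ ∈ K, ∀ n m : ℕ, 1 ≤ n → 1 ≤ m → ‖F n μ - F m μ‖ ≤ C / n + C / m :=
      fun μ hμ n m hn hm => norm_div_sub_div_le_of_quasi_additive
        (a := fun n => ∫ x, φ n x ∂(μ : Measure X))
        (norm_integral_quasi_additive hT hφcont hC hμ) hn hm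
    have hcau : UniformCauchySeqOn F atTop K := by
      rw [Metric.uniformCauchySeqOn_iff]
      intro ε hε
      have hlim := (tendsto_const_div_atTop_nhds_zero_nat C).eventually
        (gt_mem_nhds (half_pos hε))
      obtain ⟨N, hN⟩ := eventually_atTop.1 (hlim.and (eventually_ge_atTop 1))
      refine ⟨N, fun m hm n hn μ hμ => ?_⟩
      rw [dist_eq_norm]
      have := hbound μ hμ m n (hN m hm).2 (hN n hn).2
      linarith [(hN m hm).1, (hN n hn).1]
    have hex : ∀ μ, ∃ l, μ ∈ K → Tendsto (fun n => F n μ) atTop (𝓝 l) := by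
      intro μ
      by_cases hμ : μ ∈ K
      · obtain ⟨l, hl⟩ := cauchySeq_tendsto_of_complete (hcau.cauchySeq hμ)
        exact ⟨l, fun _ => hl⟩
      · exact ⟨0, fun h => absurd h hμ⟩
    choose L hL using hex
    have hunif : TendstoUniformlyOn F L atTop K :=
      hcau.tendstoUniformlyOn_of_tendsto fun μ hμ => hL μ hμ
    have hLc : ContinuousOn L K := by
      refine hunif.continuousOn (Eventually.frequently ?_)
      -- `φ 0` is not assumed continuous.
      filter_upwards [eventually_ge_atTop 1] with n hn
      exact ((continuous_integral_pi (hφcont n hn)).const_smul (1 / (n : ℝ))).continuousOn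
    convert hKc.image_of_continuousOn hLc using 1
    ext α
    constructor
    · rintro ⟨μ, hp, hinv, hlim⟩
      have hμ : (⟨μ, hp⟩ : ProbabilityMeasure X) ∈ K := hinv
      exact ⟨⟨μ, hp⟩, hμ, tendsto_nhds_unique (hL _ hμ) hlim⟩
    · rintro ⟨μ, hμ, rfl⟩
      exact ⟨μ, inferInstance, hμ, hL μ hμ⟩
  · rintro α ⟨μ, hμp, hμ, hα⟩ β ⟨ν, hνp, hν, hβ⟩ a b ha hb hab
    refine ⟨ENNReal.ofReal a • μ + ENNReal.ofReal b • ν, ⟨?_⟩, ?_, ?_⟩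
    · simp [← ENNReal.ofReal_add ha hb, hab]
    · rw [Measure.map_add _ _ hT.measurable, Measure.map_smul, Measure.map_smul, hμ, hν]
    · refine ((hα.const_smul a).add (hβ.const_smul b)).congr' ?_
      filter_upwards [eventually_ge_atTop 1] with n hn
      have hint : ∀ (ρ : Measure X) [IsProbabilityMeasure ρ], Integrable (φ n) ρ := fun ρ _ =>
        (hφcont n hn).integrable_of_hasCompactSupport (HasCompactSupport.of_compactSpace _)
      rw [integral_add_measure ((hint μ).smul_measure ENNReal.ofReal_ne_top)
        ((hint ν).smul_measure ENNReal.ofReal_ne_top), integral_smul_measure,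
        integral_smul_measure, ENNReal.toReal_ofReal ha, ENNReal.toReal_ofReal hb, smul_add,
        smul_comm a, smul_comm b]
end

section
/- Let Σ = {1,…,m}^ℕ be the full shift on m symbols with the shift map σ, and let Φ = (φ_n)_{n≥1} be an almost additive sequence on (Σ,σ) with values in ℝ^d. Then lim_{n→∞} (1/n) ‖Φ‖_n = 0, where ‖Φ‖_n := sup{ |φ_n(ω) − φ_n(τ)| : ω, τ ∈ Σ with ω_i = τ_i for 1 ≤ i ≤ n } and |·| is the Euclidean norm on ℝ^d. -/
open Filter Topology

/-!
Fix a block length `p`. By compactness `φ_p` is uniformly continuous, so there is an `N` such that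
`φ_p` varies by at most `1` between points agreeing on their first `N` coordinates. For large `n`,
splitting off the first block of length `p` costs at most `1` from `φ_p` and `2C` from almost
additivity, and the shifted points still agree on `n - p` coordinates. Hence, by induction on `n`,
the `n`-th variation is at most `(2C + 1) n / p + K_p`, where `K_p` absorbs the finitely many small
`n` (`variation_le`). Dividing by `n` and letting first `n → ∞` and then `p → ∞` gives the claim.
The vector-valued case is treated directly, with `C` the sum of the coordinate constants.
-/

/-- Uniform continuity on the compact full shift, in terms of cylinders. -/
lemma exists_cylinder_variation_le_one {m : ℕ} {E : Type*} [SeminormedAddCommGroup E]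
    {f : (ℕ → Fin m) → E} (hf : Continuous f) :
    ∃ N : ℕ, ∀ ω τ : ℕ → Fin m, (∀ i < N, ω i = τ i) → ‖f ω - f τ‖ ≤ 1 := by
  -- The topology of this metric is the product topology by definition.
  let _ : MetricSpace (ℕ → Fin m) := PiNat.metricSpace
  have huc : UniformContinuous f := CompactSpace.uniformContinuous_of_continuous hf
  obtain ⟨δ, hδ, h⟩ := Metric.uniformContinuous_iff.1 huc 1 one_pos
  obtain ⟨N, hN⟩ := exists_pow_lt_of_lt_one hδ (by norm_num : (1 / 2 : ℝ) < 1)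
  refine ⟨N, fun ω τ hωτ => ?_⟩
  have hd : dist ω τ ≤ (1 / 2) ^ N :=
    PiNat.mem_cylinder_iff_dist_le.1 (fun i hi => hωτ i hi)
  have := h (hd.trans_lt hN)
  rw [dist_eq_norm] at this
  exact this.le

lemma exists_norm_sub_le {m : ℕ} {E : Type*} [SeminormedAddCommGroup E]
    {f : (ℕ → Fin m) → E} (hf : Continuous f) :
    ∃ M : ℝ, 0 ≤ M ∧ ∀ ω τ : ℕ → Fin m, ‖f ω - f τ‖ ≤ M := by
  have hc : Continuous fun x : (ℕ → Fin m) × (ℕ → Fin m) => ‖f x.1 - f x.2‖ := by fun_prop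
  obtain ⟨M, hM⟩ := (isCompact_range hc).bddAbove
  exact ⟨max M 0, le_max_right _ _,
    fun ω τ => (hM ⟨(ω, τ), rfl⟩).trans (le_max_left _ _)⟩

/-- The `n`-th variation grows at most linearly, with a slope `(2C + 1) / p` that is as small as
desired; only the additive constant depends badly on `p`. -/
lemma variation_le {m : ℕ} {E : Type*} [SeminormedAddCommGroup E]
    {φ : ℕ → (ℕ → Fin m) → E} (hφ : ∀ n, 1 ≤ n → Continuous (φ n)) {C : ℝ} (hC : 0 ≤ C)
    (haa : ∀ n p : ℕ, 1 ≤ n → 1 ≤ p → ∀ ω : ℕ → Fin m,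
      ‖φ (n + p) ω - φ n ω - φ p (fun k => ω (k + n))‖ ≤ C)
    {p : ℕ} (hp : 1 ≤ p) :
    ∃ K : ℝ, 0 ≤ K ∧ ∀ n, 1 ≤ n → ∀ ω τ : ℕ → Fin m, (∀ i < n, ω i = τ i) →
      ‖φ n ω - φ n τ‖ ≤ (2 * C + 1) * n / p + K := by
  obtain ⟨N, hN⟩ := exists_cylinder_variation_le_one (hφ p hp)
  have hM : ∀ n, ∃ M : ℝ, 0 ≤ M ∧ (1 ≤ n → ∀ ω τ : ℕ → Fin m, ‖φ n ω - φ n τ‖ ≤ M) := by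
    intro n
    by_cases hn : 1 ≤ n
    · obtain ⟨M, h0, h⟩ := exists_norm_sub_le (hφ n hn)
      exact ⟨M, h0, fun _ => h⟩
    · exact ⟨0, le_rfl, fun h => absurd h hn⟩
  choose M hM0 hM using hM
  have hp' : (0 : ℝ) < p := by exact_mod_cast hp
  -- `K` bounds the variation for all `n ≤ N + p`.
  refine ⟨∑ n ∈ Finset.range (N + p + 1), M n, Finset.sum_nonneg fun n _ => hM0 n, ?_⟩
  intro n
  induction n using Nat.strong_induction_on with
  | _ n ih =>
    intro hn ω τ hωτ
    by_cases hle : n ≤ N + p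
    · have h1 : M n ≤ ∑ n ∈ Finset.range (N + p + 1), M n :=
        Finset.single_le_sum (fun i _ => hM0 i) (Finset.mem_range.2 (by omega))
      have h2 : 0 ≤ (2 * C + 1) * n / p := by positivity
      linarith [hM n hn ω τ]
    · obtain ⟨q, rfl⟩ : ∃ q, n = p + q := ⟨n - p, by omega⟩
      have h1 := ih q (by omega) (by omega) (fun k => ω (k + p)) (fun k => τ (k + p))
        (fun i hi => hωτ _ (by omega))
      have h2 := hN ω τ (fun i hi => hωτ i (by omega))
      have h3 := haa p q hp (by omega) ω
      have h4 := haa p q hp (by omega) τ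
      have key : φ (p + q) ω - φ (p + q) τ =
          (φ (p + q) ω - φ p ω - φ q (fun k => ω (k + p)))
          - (φ (p + q) τ - φ p τ - φ q (fun k => τ (k + p)))
          + ((φ p ω - φ p τ) + (φ q (fun k => ω (k + p)) - φ q (fun k => τ (k + p)))) := by
        abel
      have h5 : (2 * C + 1) * ((p + q : ℕ) : ℝ) / p = (2 * C + 1) + (2 * C + 1) * q / p := by
        push_cast
        field_simp
      rw [key, h5]
      refine (norm_add_le _ _).trans ?_
      have h6 := norm_sub_le (φ (p + q) ω - φ p ω - φ q (fun k => ω (k + p)))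
        (φ (p + q) τ - φ p τ - φ q (fun k => τ (k + p)))
      have h7 := norm_add_le (φ p ω - φ p τ)
        (φ q (fun k => ω (k + p)) - φ q (fun k => τ (k + p)))
      linarith

lemma euclidean_norm_le_sum {d : ℕ} (x : EuclideanSpace ℝ (Fin d)) : ‖x‖ ≤ ∑ j, |x j| := by
  rw [EuclideanSpace.norm_eq]
  refine Real.sqrt_le_iff.2 ⟨Finset.sum_nonneg fun _ _ => abs_nonneg _, ?_⟩
  exact Finset.sum_sq_le_sq_sum_of_nonneg fun _ _ => abs_nonneg _

/-- For an `ℝ^d`-valued almost additive sequence `Φ` on the full shift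
`Σ = {1,…,m}^ℕ` (shift `σ`), the `n`-th variations satisfy `lim_{n→∞} (1/n) ‖Φ‖_n = 0`,
where `‖Φ‖_n = sup {|φ_n(ω) − φ_n(τ)| : ω, τ agree on the first n coordinates}` and
`|·|` is the Euclidean norm on `ℝ^d`. -/
theorem almost_additive_variation_tendsto_zero
    (m : ℕ) (hm : 2 ≤ m) (d : ℕ)
    (φ : ℕ → (ℕ → Fin m) → EuclideanSpace ℝ (Fin d))
    (hφcont : ∀ n, 1 ≤ n → Continuous (φ n))
    (haa : ∀ j : Fin d, ∃ C : ℝ, 0 < C ∧ ∀ n p : ℕ, 1 ≤ n → 1 ≤ p → ∀ ω : ℕ → Fin m,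
      -C + φ n ω j + φ p (fun k => ω (k + n)) j ≤ φ (n + p) ω j ∧
        φ (n + p) ω j ≤ φ n ω j + φ p (fun k => ω (k + n)) j + C) :
    Tendsto (fun n : ℕ => (1 / (n : ℝ)) *
        sSup {r : ℝ | ∃ ω τ : ℕ → Fin m,
          (∀ i < n, ω i = τ i) ∧ r = ‖φ n ω - φ n τ‖})
      atTop (𝓝 0) := by
  choose C hC0 hC using haa
  have hCs : 0 ≤ ∑ j, C j := Finset.sum_nonneg fun j _ => (hC0 j).le
  have haa' : ∀ n p : ℕ, 1 ≤ n → 1 ≤ p → ∀ ω : ℕ → Fin m,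
      ‖φ (n + p) ω - φ n ω - φ p (fun k => ω (k + n))‖ ≤ ∑ j, C j := by
    intro n p hn hp ω
    refine (euclidean_norm_le_sum _).trans (Finset.sum_le_sum fun j _ => ?_)
    have h := hC j n p hn hp ω
    simp only [PiLp.sub_apply]
    exact abs_le.2 ⟨by linarith [h.1], by linarith [h.2]⟩
  set A : ℝ := 2 * (∑ j, C j) + 1 with hA
  have hApos : 0 < A := by linarith
  rw [Metric.tendsto_atTop]
  intro ε hε
  obtain ⟨p, hp⟩ := exists_nat_gt (2 * A / ε)
  have hp0 : (0 : ℝ) < p := lt_of_le_of_lt (by positivity) hp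
  obtain ⟨K, hK0, hK⟩ := variation_le hφcont hCs haa' (p := p) (by exact_mod_cast hp0)
  obtain ⟨n₀, hn₀⟩ := exists_nat_gt (2 * K / ε)
  refine ⟨n₀, fun n hn => ?_⟩
  have hn' : 2 * K / ε < n := hn₀.trans_le (by exact_mod_cast hn)
  have hn0 : (0 : ℝ) < n := lt_of_le_of_lt (by positivity) hn'
  have hn1 : 1 ≤ n := by exact_mod_cast hn0
  have hnonneg : 0 ≤ sSup {r : ℝ | ∃ ω τ : ℕ → Fin m,
      (∀ i < n, ω i = τ i) ∧ r = ‖φ n ω - φ n τ‖} :=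
    Real.sSup_nonneg (by rintro r ⟨ω, τ, -, rfl⟩; exact norm_nonneg _)
  have hle : sSup {r : ℝ | ∃ ω τ : ℕ → Fin m,
      (∀ i < n, ω i = τ i) ∧ r = ‖φ n ω - φ n τ‖} ≤ A * n / p + K :=
    Real.sSup_le (by rintro r ⟨ω, τ, h, rfl⟩; exact hK n hn1 ω τ h) (by positivity)
  rw [Real.dist_eq, sub_zero, abs_of_nonneg (by positivity), one_div_mul_eq_div, div_lt_iff₀ hn0]
  have h1 : A / p < ε / 2 := by
    rw [div_lt_iff₀ hε] at hp
    rw [div_lt_iff₀ hp0]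
    linarith
  have h2 : A * n / p < ε / 2 * n := by
    rw [mul_div_right_comm]
    exact mul_lt_mul_of_pos_right h1 hn0
  rw [div_lt_iff₀ hε] at hn'
  linarith
end

section
/- In the piecewise expanding interval setting (possibly with parabolic fixed points), the diameters of the cylinder intervals tend to 0 uniformly: lim_{n→∞} sup_{ω ∈ Σ} D_n(ω) = 0, where D_n(ω) = diam(T_{ω_1}∘T_{ω_2}∘⋯∘T_{ω_n}([0,1])). -/
/-!
Each branch `f = T i` strictly decreases distances: the mean value theorem gives
`|f x - f y| < |x - y|` as long as the fixed point is not strictly between `x` and `y`, and otherwise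
the segment is cut at the fixed point. By compactness of `{(x, y) : |x - y| ≥ ε}` this improves to
a uniform drop: for every `ε > 0` there is `δ > 0` with `|f x - f y| ≤ max ε (|x - y| - δ)`
(`exists_uniform_drop`), and `δ` may be taken common to the finitely many branches. Iterating,
`|x - y|` is at most `max ε (1 - n δ)` on every cylinder of order `n`
(`abs_branchComp_sub_le`), which is `ε` once `n δ ≥ 1`. The order of composition plays no role.
-/

open Filter Topology

/-- Composition `T_{ω_1} ∘ T_{ω_2} ∘ ⋯ ∘ T_{ω_n}` of the first `n` inverse branches
along the symbol sequence `ω` (0-indexed: `T (ω 0) ∘ ⋯ ∘ T (ω (n-1))`). -/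
def branchComp {m : ℕ} (T : Fin m → ℝ → ℝ) (ω : ℕ → Fin m) : ℕ → ℝ → ℝ
  | 0 => id
  | n + 1 => branchComp T ω n ∘ T (ω n)

/-- The cylinder interval `I_n(ω) = T_{ω_1} ∘ ⋯ ∘ T_{ω_n} ([0,1])`. -/
def cylSet {m : ℕ} (T : Fin m → ℝ → ℝ) (ω : ℕ → Fin m) (n : ℕ) : Set ℝ :=
  branchComp T ω n '' Set.Icc 0 1

/-- A map with positive derivative, less than `1` away from a single point `p`, strictly decreases
distances: the value of the derivative at `p` does not matter, since a segment containing `p` in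
its interior can be cut there. -/
lemma abs_sub_lt_of_deriv {f f' : ℝ → ℝ} {p : ℝ}
    (hd : ∀ y ∈ Set.Icc (0:ℝ) 1, HasDerivWithinAt f (f' y) (Set.Icc 0 1) y)
    (hpos : ∀ y ∈ Set.Icc (0:ℝ) 1, 0 < f' y)
    (hlt : ∀ y ∈ Set.Icc (0:ℝ) 1, y ≠ p → f' y < 1)
    {x y : ℝ} (hx : x ∈ Set.Icc (0:ℝ) 1) (hy : y ∈ Set.Icc (0:ℝ) 1) (hxy : x ≠ y) :
    |f x - f y| < |x - y| := by
  have key : ∀ a ∈ Set.Icc (0:ℝ) 1, ∀ b ∈ Set.Icc (0:ℝ) 1, a < b → p ∉ Set.Ioo a b →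
      0 < f b - f a ∧ f b - f a < b - a := by
    intro a ha b hb hab hp
    have hsub : Set.Icc a b ⊆ Set.Icc 0 1 := Set.Icc_subset_Icc ha.1 hb.2
    obtain ⟨c, hc, hce⟩ := exists_hasDerivAt_eq_slope f f' hab
      (fun z hz => (hd z (hsub hz)).continuousWithinAt.mono hsub)
      (fun z hz => (hd z (hsub (Set.Ioo_subset_Icc_self hz))).hasDerivAt
        (Icc_mem_nhds (ha.1.trans_lt hz.1) (hz.2.trans_le hb.2)))
    have hc1 := hsub (Set.Ioo_subset_Icc_self hc)
    have h1 := hpos c hc1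
    have h2 := hlt c hc1 (fun h => hp (h ▸ hc))
    have hba : 0 < b - a := sub_pos.2 hab
    rw [hce] at h1 h2
    exact ⟨(div_pos_iff_of_pos_right hba).1 h1, (div_lt_one hba).1 h2⟩
  have key' : ∀ a ∈ Set.Icc (0:ℝ) 1, ∀ b ∈ Set.Icc (0:ℝ) 1, a < b → |f a - f b| < |a - b| := by
    intro a ha b hb hab
    have h : 0 < f b - f a ∧ f b - f a < b - a := by
      by_cases hp : p ∈ Set.Ioo a b
      · have hp1 : p ∈ Set.Icc (0:ℝ) 1 := ⟨ha.1.trans hp.1.le, hp.2.le.trans hb.2⟩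
        have h1 := key a ha p hp1 hp.1 (fun h => lt_irrefl _ h.2)
        have h2 := key p hp1 b hb hp.2 (fun h => lt_irrefl _ h.1)
        constructor <;> linarith [h1.1, h1.2, h2.1, h2.2]
      · exact key a ha b hb hab hp
    rw [abs_sub_comm, abs_of_pos h.1, abs_sub_comm, abs_of_pos (sub_pos.2 hab)]
    exact h.2
  rcases lt_or_gt_of_ne hxy with h | h
  · exact key' x hx y hy h
  · rw [abs_sub_comm, abs_sub_comm x]
    exact key' y hy x hx h

lemma exists_uniform_drop {f : ℝ → ℝ} (hf : ContinuousOn f (Set.Icc 0 1))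
    (hc : ∀ x ∈ Set.Icc (0:ℝ) 1, ∀ y ∈ Set.Icc (0:ℝ) 1, x ≠ y → |f x - f y| < |x - y|)
    {ε : ℝ} (hε : 0 < ε) :
    ∃ δ > 0, ∀ x ∈ Set.Icc (0:ℝ) 1, ∀ y ∈ Set.Icc (0:ℝ) 1,
      |f x - f y| ≤ max ε (|x - y| - δ) := by
  let K : Set (ℝ × ℝ) := (Set.Icc 0 1 ×ˢ Set.Icc 0 1) ∩ {q | ε ≤ |q.1 - q.2|}
  have hK : IsCompact K := (isCompact_Icc.prod isCompact_Icc).inter_right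
    (isClosed_le continuous_const (by fun_prop))
  have h1 : ContinuousOn (fun q : ℝ × ℝ => f q.1) K :=
    hf.comp continuousOn_fst (fun q hq => hq.1.1)
  have h2 : ContinuousOn (fun q : ℝ × ℝ => f q.2) K :=
    hf.comp continuousOn_snd (fun q hq => hq.1.2)
  have hcont : ContinuousOn (fun q : ℝ × ℝ => |q.1 - q.2| - |f q.1 - f q.2|) K :=
    (by fun_prop : Continuous fun q : ℝ × ℝ => |q.1 - q.2|).continuousOn.sub (h1.sub h2).abs
  obtain ⟨δ, hδ, hle⟩ : ∃ δ, 0 < δ ∧ ∀ q ∈ K, δ ≤ |q.1 - q.2| - |f q.1 - f q.2| := by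
    refine hK.exists_forall_le' hcont (a := 0) fun q hq => sub_pos.2 (hc _ hq.1.1 _ hq.1.2 ?_)
    intro h
    have h3 : ε ≤ |q.1 - q.2| := hq.2
    rw [h, sub_self, abs_zero] at h3
    linarith
  refine ⟨δ, hδ, fun x hx y hy => ?_⟩
  rcases le_or_gt ε |x - y| with h | h
  · have := hle (x, y) ⟨⟨hx, hy⟩, h⟩
    exact le_max_of_le_right (by simp only at this; linarith)
  · refine le_max_of_le_left ?_
    rcases eq_or_ne x y with rfl | hne
    · simpa using hε.le
    · exact ((hc x hx y hy hne).trans h).le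

lemma abs_branchComp_sub_le {m : ℕ} {T : Fin m → ℝ → ℝ} {ε δ : ℝ} (hδ : 0 ≤ δ)
    (hmaps : ∀ i, ∀ x ∈ Set.Icc (0:ℝ) 1, T i x ∈ Set.Icc (0:ℝ) 1)
    (hdrop : ∀ i, ∀ x ∈ Set.Icc (0:ℝ) 1, ∀ y ∈ Set.Icc (0:ℝ) 1,
      |T i x - T i y| ≤ max ε (|x - y| - δ)) (ω : ℕ → Fin m) (n : ℕ) :
    ∀ x ∈ Set.Icc (0:ℝ) 1, ∀ y ∈ Set.Icc (0:ℝ) 1,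
      |branchComp T ω n x - branchComp T ω n y| ≤ max ε (|x - y| - n * δ) := by
  induction n with
  | zero => intro x _ y _; simp [branchComp]
  | succ n ih =>
    intro x hx y hy
    refine (ih _ (hmaps (ω n) x hx) _ (hmaps (ω n) y hy)).trans ?_
    have hn : 0 ≤ (n : ℝ) * δ := by positivity
    refine max_le (le_max_left _ _) ?_
    push_cast
    rcases le_max_iff.1 (hdrop (ω n) x hx y hy) with h | h
    · exact le_max_of_le_left (by linarith)
    · exact le_max_of_le_right (by linarith)

/-- In the piecewise expanding interval setting (possibly with parabolic
fixed points), the diameters of cylinder intervals tend to 0 uniformly: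
`lim_{n→∞} sup_{ω ∈ Σ} D_n(ω) = 0` where `D_n(ω) = diam I_n(ω)`. -/
theorem cylinder_diam_tendsto_zero
    (m : ℕ) (hm : 2 ≤ m)
    (I : Fin m → Set ℝ) (T : Fin m → ℝ → ℝ) (T' : Fin m → ℝ → ℝ) (xfix : Fin m → ℝ)
    (hI : ∀ i, ∃ a b : ℝ, a < b ∧ 0 ≤ a ∧ b ≤ 1 ∧ I i = Set.Icc a b)
    (hdisj : ∀ i j, i ≠ j → Disjoint (interior (I i)) (interior (I j)))
    (hbij : ∀ i, Set.BijOn (T i) (Set.Icc 0 1) (I i))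
    (hderiv : ∀ i, ∀ y ∈ Set.Icc (0:ℝ) 1, HasDerivWithinAt (T i) (T' i y) (Set.Icc 0 1) y)
    (hT'cont : ∀ i, ContinuousOn (T' i) (Set.Icc 0 1))
    (hT'pos : ∀ i, ∀ y ∈ Set.Icc (0:ℝ) 1, 0 < T' i y)
    (hT'le : ∀ i, ∀ y ∈ Set.Icc (0:ℝ) 1, T' i y ≤ 1)
    (hxmem : ∀ i, xfix i ∈ I i)
    (hxfix : ∀ i, T i (xfix i) = xfix i)
    (hxuniq : ∀ i, ∀ y ∈ Set.Icc (0:ℝ) 1, T i y = y → y = xfix i)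
    (hT'lt : ∀ i, ∀ y ∈ Set.Icc (0:ℝ) 1, y ≠ xfix i → T' i y < 1) :
    Tendsto (fun n : ℕ => ⨆ ω : ℕ → Fin m, Metric.diam (cylSet T ω n)) atTop (𝓝 0) := by
  have hmaps : ∀ i, ∀ x ∈ Set.Icc (0:ℝ) 1, T i x ∈ Set.Icc (0:ℝ) 1 := by
    intro i x hx
    obtain ⟨a, b, _, ha, hb, hIi⟩ := hI i
    have h := (hbij i).mapsTo hx
    rw [hIi] at h
    exact ⟨ha.trans h.1, h.2.trans hb⟩
  rw [Metric.tendsto_atTop]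
  intro ε hε
  choose d hd0 hd using fun i => exists_uniform_drop
    (fun y hy => (hderiv i y hy).continuousWithinAt)
    (fun x hx y hy h => abs_sub_lt_of_deriv (hderiv i) (hT'pos i) (hT'lt i) hx hy h)
    (half_pos hε)
  -- a drop common to the finitely many branches
  obtain ⟨δ, hδd, hδ⟩ : ∃ δ, (∀ i, δ ≤ d i) ∧ 0 < δ := by
    have h : ∀ᶠ δ in 𝓝[>] (0:ℝ), ∀ i, δ ≤ d i :=
      eventually_all.2 fun i => nhdsWithin_le_nhds (Iic_mem_nhds (hd0 i))
    exact (h.and self_mem_nhdsWithin).exists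
  obtain ⟨N, hN⟩ := exists_nat_ge (1 / δ)
  refine ⟨N, fun n hn => ?_⟩
  have hnδ : 1 ≤ n * δ := (div_le_iff₀ hδ).1 (hN.trans (by exact_mod_cast hn))
  have hsup : ⨆ ω : ℕ → Fin m, Metric.diam (cylSet T ω n) ≤ ε / 2 := by
    refine Real.iSup_le (fun ω => Metric.diam_le_of_forall_dist_le (half_pos hε).le ?_)
      (half_pos hε).le
    rintro _ ⟨x, hx, rfl⟩ _ ⟨y, hy, rfl⟩
    rw [Real.dist_eq]
    refine (abs_branchComp_sub_le hδ.le hmaps (fun i x hx y hy => (hd i x hx y hy).trans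
      (max_le_max le_rfl (by linarith [hδd i]))) ω n x hx y hy).trans (max_le le_rfl ?_)
    have : |x - y| ≤ 1 := abs_le.2 ⟨by linarith [hx.1, hy.2], by linarith [hx.2, hy.1]⟩
    linarith
  rw [Real.dist_eq, sub_zero, abs_of_nonneg (Real.iSup_nonneg fun _ => Metric.diam_nonneg)]
  linarith
end

section
/- In the piecewise expanding interval setting (possibly with parabolic fixed points), with Π the coding map and g(ω) := −log T_{ω_1}′(Π(σω)), one has lim_{n→∞} sup_{ω ∈ Σ} | −(1/n) log D_n(ω) − A_n g(ω) | = 0, where A_n g(ω) := (1/n) ∑_{j=0}^{n−1} g(σ^j ω). -/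
/-!
By the mean value theorem, `D_{n+1}(ω) = T'_{ω_1}(ξ) · D_n(σω)` for some `ξ` in the interval
`I_n(σω)`, which also contains `Π(σω)`. Hence the error
`E_n(ω) = |-log D_n(ω) - ∑_{j<n} g(σ^j ω)|` satisfies
`E_{n+1}(ω) ≤ E_n(σω) + |log T'_{ω_1}(ξ) - log T'_{ω_1}(Π(σω))|`, and the last term is small,
uniformly in `ω`, once `n` is large, because `log T'_i` is uniformly continuous and
`sup_ω D_n(ω) → 0`. Summing (`error_le`) and dividing by `n` gives the claim.

The uniform decay `sup_ω D_n(ω) → 0` (`uniform_decay`) needs an argument since `T'_i` may equal `1`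
at the fixed point. As this happens at one point only, `T_i` strictly decreases distances, and by
compactness it shortens every interval of length at least `ε` by at least some `δ > 0` not depending
on the interval or on `i`. Thus `D_n(ω) ≤ max ε (1 - n δ)`.
-/

open Filter Topology

/-! ### A single branch -/

lemma exists_slope {f f' : ℝ → ℝ}
    (hf : ∀ y ∈ Set.Icc (0:ℝ) 1, HasDerivWithinAt f (f' y) (Set.Icc 0 1) y)
    {x y : ℝ} (hx : 0 ≤ x) (hy : y ≤ 1) (hxy : x < y) :
    ∃ c ∈ Set.Ioo x y, f y - f x = f' c * (y - x) := by
  obtain ⟨c, hc, h⟩ := exists_hasDerivAt_eq_slope f f' hxy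
    (fun z hz => ((hf z ⟨hx.trans hz.1, hz.2.trans hy⟩).continuousWithinAt).mono
      (Set.Icc_subset_Icc hx hy))
    (fun z hz => (hf z ⟨hx.trans hz.1.le, hz.2.le.trans hy⟩).hasDerivAt
      (Icc_mem_nhds (hx.trans_lt hz.1) (hz.2.trans_le hy)))
  refine ⟨c, hc, ?_⟩
  rw [h, div_mul_cancel₀]
  exact (sub_pos.2 hxy).ne'

/-- A single point `p` with derivative `1` does not prevent strict contraction: an interval
containing `p` in its interior is split at `p`. -/
lemma strict_contraction {f f' : ℝ → ℝ} {p : ℝ}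
    (hf : ∀ y ∈ Set.Icc (0:ℝ) 1, HasDerivWithinAt f (f' y) (Set.Icc 0 1) y)
    (hlt : ∀ y ∈ Set.Icc (0:ℝ) 1, y ≠ p → f' y < 1)
    {x y : ℝ} (hx : 0 ≤ x) (hy : y ≤ 1) (hxy : x < y) : f y - f x < y - x := by
  have key : ∀ a b : ℝ, 0 ≤ a → b ≤ 1 → a < b → p ∉ Set.Ioo a b → f b - f a < b - a := by
    intro a b ha hb hab hp
    obtain ⟨c, hc, h⟩ := exists_slope hf ha hb hab
    have h1 : f' c < 1 := hlt c ⟨ha.trans hc.1.le, hc.2.le.trans hb⟩ (fun e => hp (e ▸ hc))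
    rw [h]
    nlinarith
  by_cases hp : p ∈ Set.Ioo x y
  · have h1 := key x p hx (hp.2.le.trans hy) hp.1 (fun h => lt_irrefl _ h.2)
    have h2 := key p y (hx.trans hp.1.le) hy hp.2 (fun h => lt_irrefl _ h.1)
    linarith
  · exact key x y hx hy hxy hp

lemma exists_gap {f f' : ℝ → ℝ} {p : ℝ}
    (hf : ∀ y ∈ Set.Icc (0:ℝ) 1, HasDerivWithinAt f (f' y) (Set.Icc 0 1) y)
    (hlt : ∀ y ∈ Set.Icc (0:ℝ) 1, y ≠ p → f' y < 1) {ε : ℝ} (hε : 0 < ε) :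
    ∃ δ > 0, ∀ x y : ℝ, 0 ≤ x → y ≤ 1 → ε ≤ y - x → f y - f x ≤ y - x - δ := by
  have hfc : ContinuousOn f (Set.Icc 0 1) := fun z hz => (hf z hz).continuousWithinAt
  let K : Set (ℝ × ℝ) := (Set.Icc (0:ℝ) 1 ×ˢ Set.Icc (0:ℝ) 1) ∩ {q | ε ≤ q.2 - q.1}
  have hK : IsCompact K := (isCompact_Icc.prod isCompact_Icc).inter_right
    (isClosed_le continuous_const (continuous_snd.sub continuous_fst))
  have hc : ContinuousOn (fun q : ℝ × ℝ => q.2 - q.1 - (f q.2 - f q.1)) K := by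
    refine ((continuous_snd.sub continuous_fst).continuousOn).sub ?_
    exact (hfc.comp continuous_snd.continuousOn (fun q hq => hq.1.2)).sub
      (hfc.comp continuous_fst.continuousOn (fun q hq => hq.1.1))
  obtain ⟨δ, hδ, h⟩ := hK.exists_forall_le' hc (a := 0) (by
    rintro ⟨x, y⟩ ⟨⟨hx, hy⟩, hq⟩
    have hq' : ε ≤ y - x := hq
    have := strict_contraction hf hlt (x := x) (y := y) hx.1 hy.2 (by linarith)
    show 0 < y - x - (f y - f x)
    linarith)
  refine ⟨δ, hδ, fun x y hx hy hxy => ?_⟩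
  have := h (x, y) ⟨⟨⟨hx, by linarith⟩, ⟨by linarith, hy⟩⟩, hxy⟩
  simp only at this
  linarith

/-! ### Cylinders -/

/-- `branchComp` appends branches on the inside; this peels off the outermost branch instead. -/
lemma branchComp_succ' {m : ℕ} (T : Fin m → ℝ → ℝ) (ω : ℕ → Fin m) (n : ℕ) (x : ℝ) :
    branchComp T ω (n + 1) x = T (ω 0) (branchComp T (fun k => ω (k + 1)) n x) := by
  induction n generalizing x with
  | zero => rfl
  | succ n ih => exact ih (T (ω (n + 1)) x)

section Cylinders

variable {m : ℕ} {T : Fin m → ℝ → ℝ}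

lemma branchComp_mapsTo (hmaps : ∀ i, Set.MapsTo (T i) (Set.Icc 0 1) (Set.Icc 0 1))
    (ω : ℕ → Fin m) (n : ℕ) :
    Set.MapsTo (branchComp T ω n) (Set.Icc 0 1) (Set.Icc 0 1) := by
  induction n with
  | zero => exact fun x hx => hx
  | succ n ih => exact fun x hx => ih (hmaps _ hx)

lemma branchComp_strictMonoOn (hmaps : ∀ i, Set.MapsTo (T i) (Set.Icc 0 1) (Set.Icc 0 1))
    (hmono : ∀ i, StrictMonoOn (T i) (Set.Icc 0 1)) (ω : ℕ → Fin m) (n : ℕ) :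
    StrictMonoOn (branchComp T ω n) (Set.Icc 0 1) := by
  induction n with
  | zero => exact fun x _ y _ h => h
  | succ n ih => exact fun x hx y hy h => ih (hmaps _ hx) (hmaps _ hy) (hmono _ hx hy h)

lemma cylSet_subset (hmaps : ∀ i, Set.MapsTo (T i) (Set.Icc 0 1) (Set.Icc 0 1))
    (hmono : ∀ i, StrictMonoOn (T i) (Set.Icc 0 1)) (ω : ℕ → Fin m) (n : ℕ) :
    cylSet T ω n ⊆ Set.Icc (branchComp T ω n 0) (branchComp T ω n 1) := by
  rintro _ ⟨x, hx, rfl⟩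
  have h := (branchComp_strictMonoOn hmaps hmono ω n).monotoneOn
  exact ⟨h (by simp) hx hx.1, h hx (by simp) hx.2⟩

lemma diam_cylSet (hmaps : ∀ i, Set.MapsTo (T i) (Set.Icc 0 1) (Set.Icc 0 1))
    (hmono : ∀ i, StrictMonoOn (T i) (Set.Icc 0 1)) (ω : ℕ → Fin m) (n : ℕ) :
    Metric.diam (cylSet T ω n) = branchComp T ω n 1 - branchComp T ω n 0 := by
  have hlt : branchComp T ω n 0 < branchComp T ω n 1 :=
    branchComp_strictMonoOn hmaps hmono ω n (by simp) (by simp) one_pos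
  have hsub := cylSet_subset hmaps hmono ω n
  apply le_antisymm
  · rw [← Real.diam_Icc hlt.le]
    exact Metric.diam_mono hsub (Metric.isBounded_Icc _ _)
  · have := Metric.dist_le_diam_of_mem ((Metric.isBounded_Icc _ _).subset hsub)
      (Set.mem_image_of_mem _ (by simp : (1:ℝ) ∈ Set.Icc 0 1))
      (Set.mem_image_of_mem _ (by simp : (0:ℝ) ∈ Set.Icc 0 1))
    rw [Real.dist_eq] at this
    exact (le_abs_self _).trans this

/-- If every branch shortens all intervals of length at least `ε` by at least `δ` and never
expands, then all cylinders of a large enough level have length at most `ε`. -/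
lemma uniform_decay (hmaps : ∀ i, Set.MapsTo (T i) (Set.Icc 0 1) (Set.Icc 0 1))
    (hmono : ∀ i, StrictMonoOn (T i) (Set.Icc 0 1))
    (hcontr : ∀ i, ∀ x y : ℝ, 0 ≤ x → y ≤ 1 → x < y → T i y - T i x < y - x)
    {ε δ : ℝ} (hδ : 0 < δ)
    (hgap : ∀ i, ∀ x y : ℝ, 0 ≤ x → y ≤ 1 → ε ≤ y - x → T i y - T i x ≤ y - x - δ) :
    ∃ N : ℕ, ∀ n ≥ N, ∀ ω : ℕ → Fin m, branchComp T ω n 1 - branchComp T ω n 0 ≤ ε := by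
  have key : ∀ n : ℕ, ∀ ω : ℕ → Fin m,
      branchComp T ω n 1 - branchComp T ω n 0 ≤ max ε (1 - n * δ) := by
    intro n
    induction n with
    | zero => intro ω; simp [branchComp]
    | succ n ih =>
      intro ω
      rw [branchComp_succ', branchComp_succ']
      have h := ih (fun k => ω (k + 1))
      have h0 := branchComp_mapsTo hmaps (fun k => ω (k + 1)) n (by simp : (0:ℝ) ∈ Set.Icc 0 1)
      have h1 := branchComp_mapsTo hmaps (fun k => ω (k + 1)) n (by simp : (1:ℝ) ∈ Set.Icc 0 1)
      have hlt := branchComp_strictMonoOn hmaps hmono (fun k => ω (k + 1)) n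
        (by simp : (0:ℝ) ∈ Set.Icc 0 1) (by simp : (1:ℝ) ∈ Set.Icc 0 1) one_pos
      have hc := hcontr (ω 0) _ _ h0.1 h1.2 hlt
      rcases le_or_gt ε (branchComp T (fun k => ω (k + 1)) n 1 -
        branchComp T (fun k => ω (k + 1)) n 0) with hε | hε
      · have hg := hgap (ω 0) _ _ h0.1 h1.2 hε
        rcases le_max_iff.1 h with h | h
        · exact le_max_of_le_left (by linarith)
        · refine le_max_of_le_right ?_
          push_cast
          linarith
      · exact le_max_of_le_left (by linarith)
  obtain ⟨N, hN⟩ := exists_nat_gt ((1 - ε) / δ)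
  refine ⟨N, fun n hn ω => (key n ω).trans (max_le le_rfl ?_)⟩
  rw [div_lt_iff₀ hδ] at hN
  have : (N : ℝ) * δ ≤ n * δ := by gcongr
  linarith

/-- The error between `-log D_n(ω)` and the Birkhoff sum, accumulated one level at a time: a step
from level `k` to `k + 1` costs at most `C` if `k < N`, and at most `ε` if `k ≥ N`, when cylinders
of level `k` are no longer than the modulus `η` belonging to `ε`. -/
lemma error_le (hmaps : ∀ i, Set.MapsTo (T i) (Set.Icc 0 1) (Set.Icc 0 1))
    (hmono : ∀ i, StrictMonoOn (T i) (Set.Icc 0 1)) {T' : Fin m → ℝ → ℝ}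
    (hderiv : ∀ i, ∀ y ∈ Set.Icc (0:ℝ) 1, HasDerivWithinAt (T i) (T' i y) (Set.Icc 0 1) y)
    (hT'pos : ∀ i, ∀ y ∈ Set.Icc (0:ℝ) 1, 0 < T' i y)
    {Pi : (ℕ → Fin m) → ℝ} (hPi : ∀ ω n, Pi ω ∈ cylSet T ω n)
    {g : (ℕ → Fin m) → ℝ}
    (hg : ∀ ω : ℕ → Fin m, g ω = -Real.log (T' (ω 0) (Pi (fun k => ω (k + 1)))))
    {ε η C : ℝ} {N : ℕ} (hε : 0 ≤ ε)
    (hbd : ∀ i, ∀ x ∈ Set.Icc (0:ℝ) 1, ∀ y ∈ Set.Icc (0:ℝ) 1,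
      |Real.log (T' i x) - Real.log (T' i y)| ≤ C)
    (huc : ∀ i, ∀ x ∈ Set.Icc (0:ℝ) 1, ∀ y ∈ Set.Icc (0:ℝ) 1, |x - y| ≤ η →
      |Real.log (T' i x) - Real.log (T' i y)| ≤ ε)
    (hN : ∀ n ≥ N, ∀ ω : ℕ → Fin m, branchComp T ω n 1 - branchComp T ω n 0 ≤ η)
    (n : ℕ) (ω : ℕ → Fin m) :
    |-Real.log (branchComp T ω n 1 - branchComp T ω n 0)
      - ∑ j ∈ Finset.range n, g (fun k => ω (k + j))| ≤ (min n N : ℕ) * C + n * ε := by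
  induction n generalizing ω with
  | zero => simp [branchComp]
  | succ n ih =>
    have h := ih (fun k => ω (k + 1))
    rw [branchComp_succ', branchComp_succ', Finset.sum_range_succ']
    have h0 := branchComp_mapsTo hmaps (fun k => ω (k + 1)) n (by simp : (0:ℝ) ∈ Set.Icc 0 1)
    have h1 := branchComp_mapsTo hmaps (fun k => ω (k + 1)) n (by simp : (1:ℝ) ∈ Set.Icc 0 1)
    have hlt := branchComp_strictMonoOn hmaps hmono (fun k => ω (k + 1)) n
      (by simp : (0:ℝ) ∈ Set.Icc 0 1) (by simp : (1:ℝ) ∈ Set.Icc 0 1) one_pos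
    have hp := cylSet_subset hmaps hmono _ _ (hPi (fun k => ω (k + 1)) n)
    have hNn := fun hn => hN n hn (fun k => ω (k + 1))
    have hg0 : g (fun k => ω (k + 0)) = _ := hg ω
    have hsum : ∑ j ∈ Finset.range n, g (fun k => ω (k + (j + 1)))
        = ∑ j ∈ Finset.range n, g (fun k => (fun k => ω (k + 1)) (k + j)) := rfl
    rw [hg0, hsum]
    generalize branchComp T (fun k => ω (k + 1)) n 0 = a at *
    generalize branchComp T (fun k => ω (k + 1)) n 1 = b at *
    generalize Pi (fun k => ω (k + 1)) = p at *
    generalize ∑ j ∈ Finset.range n, g (fun k => (fun k => ω (k + 1)) (k + j)) = S at *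
    obtain ⟨c, hc, hslope⟩ := exists_slope (hderiv (ω 0)) h0.1 h1.2 hlt
    have hc01 : c ∈ Set.Icc (0:ℝ) 1 := ⟨h0.1.trans hc.1.le, hc.2.le.trans h1.2⟩
    have hp01 : p ∈ Set.Icc (0:ℝ) 1 := ⟨h0.1.trans hp.1, hp.2.trans h1.2⟩
    rw [hslope, Real.log_mul (hT'pos _ _ hc01).ne' (sub_pos.2 hlt).ne']
    have hstep : |Real.log (T' (ω 0) c) - Real.log (T' (ω 0) p)|
        ≤ ((min (n + 1) N : ℕ) - (min n N : ℕ)) * C + ε := by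
      rcases lt_or_ge n N with hn | hn
      · rw [min_eq_left hn.le, min_eq_left (Nat.succ_le_of_lt hn)]
        have := hbd (ω 0) c hc01 p hp01
        push_cast
        linarith
      · rw [min_eq_right hn, min_eq_right (hn.trans n.le_succ), sub_self, zero_mul, zero_add]
        refine huc (ω 0) c hc01 p hp01 ((abs_le.2 ⟨?_, ?_⟩).trans (hNn hn))
        · linarith [hc.1, hp.2]
        · linarith [hc.2, hp.1]
    calc |-(Real.log (T' (ω 0) c) + Real.log (b - a)) - (S + -Real.log (T' (ω 0) p))|
        = |(-Real.log (b - a) - S) - (Real.log (T' (ω 0) c) - Real.log (T' (ω 0) p))| := by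
          congr 1; ring
      _ ≤ |-Real.log (b - a) - S| + |Real.log (T' (ω 0) c) - Real.log (T' (ω 0) p)| :=
          abs_sub _ _
      _ ≤ ((min n N : ℕ) * C + n * ε) + (((min (n + 1) N : ℕ) - (min n N : ℕ)) * C + ε) :=
          add_le_add h hstep
      _ = _ := by push_cast; ring

end Cylinders

/-- In the piecewise expanding interval setting, with the coding map `Π`
(characterized by `Π(ω) ∈ I_n(ω)` for all `n`) and `g(ω) := −log T_{ω_1}′(Π(σω))`,
one has `lim_{n→∞} sup_{ω ∈ Σ} |−(1/n) log D_n(ω) − A_n g(ω)| = 0`, where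
`A_n g(ω) = (1/n) ∑_{j=0}^{n−1} g(σ^j ω)`. -/
theorem diam_approx_by_birkhoff
    (m : ℕ) (hm : 2 ≤ m)
    (I : Fin m → Set ℝ) (T : Fin m → ℝ → ℝ) (T' : Fin m → ℝ → ℝ) (xfix : Fin m → ℝ)
    (hI : ∀ i, ∃ a b : ℝ, a < b ∧ 0 ≤ a ∧ b ≤ 1 ∧ I i = Set.Icc a b)
    (hdisj : ∀ i j, i ≠ j → Disjoint (interior (I i)) (interior (I j)))
    (hbij : ∀ i, Set.BijOn (T i) (Set.Icc 0 1) (I i))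
    (hderiv : ∀ i, ∀ y ∈ Set.Icc (0:ℝ) 1, HasDerivWithinAt (T i) (T' i y) (Set.Icc 0 1) y)
    (hT'cont : ∀ i, ContinuousOn (T' i) (Set.Icc 0 1))
    (hT'pos : ∀ i, ∀ y ∈ Set.Icc (0:ℝ) 1, 0 < T' i y)
    (hT'le : ∀ i, ∀ y ∈ Set.Icc (0:ℝ) 1, T' i y ≤ 1)
    (hxmem : ∀ i, xfix i ∈ I i)
    (hxfix : ∀ i, T i (xfix i) = xfix i)
    (hxuniq : ∀ i, ∀ y ∈ Set.Icc (0:ℝ) 1, T i y = y → y = xfix i)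
    (hT'lt : ∀ i, ∀ y ∈ Set.Icc (0:ℝ) 1, y ≠ xfix i → T' i y < 1)
    (Pi : (ℕ → Fin m) → ℝ) (hPi : ∀ ω n, Pi ω ∈ cylSet T ω n)
    (g : (ℕ → Fin m) → ℝ)
    (hg : ∀ ω : ℕ → Fin m, g ω = -Real.log (T' (ω 0) (Pi (fun k => ω (k + 1))))) :
    Tendsto (fun n : ℕ => ⨆ ω : ℕ → Fin m,
        |(-(1 / (n : ℝ)) * Real.log (Metric.diam (cylSet T ω n))) -
          (1 / (n : ℝ)) * ∑ j ∈ Finset.range n, g (fun k => ω (k + j))|)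
      atTop (𝓝 0) := by
  have hne : Nonempty (Fin m) := ⟨⟨0, by omega⟩⟩
  have hmaps : ∀ i, Set.MapsTo (T i) (Set.Icc 0 1) (Set.Icc 0 1) := by
    intro i x hx
    obtain ⟨a, b, -, ha, hb, hIi⟩ := hI i
    have := (hbij i).mapsTo hx
    rw [hIi] at this
    exact ⟨ha.trans this.1, this.2.trans hb⟩
  have hmono : ∀ i, StrictMonoOn (T i) (Set.Icc 0 1) := by
    intro i x hx y hy hxy
    obtain ⟨c, hc, h⟩ := exists_slope (hderiv i) hx.1 hy.2 hxy
    have := mul_pos (hT'pos i c ⟨hx.1.trans hc.1.le, hc.2.le.trans hy.2⟩) (sub_pos.2 hxy)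
    linarith
  have hlog : ∀ i, ContinuousOn (fun y => Real.log (T' i y)) (Set.Icc 0 1) :=
    fun i => (hT'cont i).log (fun y hy => (hT'pos i y hy).ne')
  -- `C` bounds the oscillation of every `log T'_i` on `[0,1]`.
  obtain ⟨C, hC, hbd⟩ : ∃ C : ℝ, 0 ≤ C ∧ ∀ i, ∀ x ∈ Set.Icc (0:ℝ) 1, ∀ y ∈ Set.Icc (0:ℝ) 1,
      |Real.log (T' i x) - Real.log (T' i y)| ≤ C := by
    choose B hB using fun i => isCompact_Icc.exists_bound_of_continuousOn (hlog i)
    obtain ⟨i₀, hi₀⟩ := Finite.exists_max B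
    have key : ∀ i, ∀ x ∈ Set.Icc (0:ℝ) 1, ∀ y ∈ Set.Icc (0:ℝ) 1,
        |Real.log (T' i x) - Real.log (T' i y)| ≤ 2 * B i₀ := by
      intro i x hx y hy
      have h1 := hB i x hx
      have h2 := hB i y hy
      rw [Real.norm_eq_abs] at h1 h2
      have h3 := abs_sub (Real.log (T' i x)) (Real.log (T' i y))
      linarith [hi₀ i]
    exact ⟨2 * B i₀, (abs_nonneg _).trans (key i₀ 0 (by simp) 0 (by simp)), key⟩
  rw [Metric.tendsto_atTop]
  intro ε hε
  obtain ⟨η, hη, huc⟩ : ∃ η > 0, ∀ i, ∀ x ∈ Set.Icc (0:ℝ) 1, ∀ y ∈ Set.Icc (0:ℝ) 1,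
      |x - y| ≤ η → |Real.log (T' i x) - Real.log (T' i y)| ≤ ε / 3 := by
    choose η hη h using fun i => Metric.uniformContinuousOn_iff.1
      (isCompact_Icc.uniformContinuousOn_of_continuous (hlog i)) (ε / 3) (by positivity)
    obtain ⟨i₀, hi₀⟩ := Finite.exists_min η
    refine ⟨η i₀ / 2, half_pos (hη i₀), fun i x hx y hy hxy => ?_⟩
    have := h i x hx y hy (by rw [Real.dist_eq]; linarith [hi₀ i, hη i₀])
    rw [Real.dist_eq] at this
    exact this.le
  obtain ⟨N, hN⟩ : ∃ N : ℕ, ∀ n ≥ N, ∀ ω : ℕ → Fin m,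
      branchComp T ω n 1 - branchComp T ω n 0 ≤ η := by
    choose δ hδ hgap using fun i => exists_gap (hderiv i) (hT'lt i) hη
    obtain ⟨i₀, hi₀⟩ := Finite.exists_min δ
    exact uniform_decay hmaps hmono
      (fun i x y hx hy hxy => strict_contraction (hderiv i) (hT'lt i) hx hy hxy) (hδ i₀)
      (fun i x y hx hy hxy => (hgap i x y hx hy hxy).trans (by linarith [hi₀ i]))
  -- Beyond `M` the contribution `N * C / n` of the first `N` levels is below `ε / 3`.
  obtain ⟨M, hM⟩ := exists_nat_gt (N * C / (ε / 3))
  refine ⟨M + 1, fun n hn => ?_⟩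
  have hn0 : (0:ℝ) < n := by exact_mod_cast (Nat.succ_pos M).trans_le hn
  have hnM : (M : ℝ) ≤ n := by exact_mod_cast (Nat.le_succ M).trans hn
  have hle : (⨆ ω : ℕ → Fin m,
        |(-(1 / (n : ℝ)) * Real.log (Metric.diam (cylSet T ω n))) -
          (1 / (n : ℝ)) * ∑ j ∈ Finset.range n, g (fun k => ω (k + j))|) ≤ 2 * (ε / 3) := by
    refine Real.iSup_le (fun ω => ?_) (by positivity)
    have h := error_le hmaps hmono hderiv hT'pos hPi hg (by positivity : 0 ≤ ε / 3) hbd huc hN n ω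
    rw [diam_cylSet hmaps hmono]
    set D := branchComp T ω n 1 - branchComp T ω n 0
    set S := ∑ j ∈ Finset.range n, g (fun k => ω (k + j))
    have e : -(1 / (n : ℝ)) * Real.log D - 1 / (n : ℝ) * S = (-Real.log D - S) / n := by ring
    rw [e, abs_div, abs_of_pos hn0, div_le_iff₀ hn0]
    have h1 : ((min n N : ℕ) : ℝ) * C ≤ N * C := by
      gcongr
      exact min_le_right _ _
    rw [div_lt_iff₀ (by positivity)] at hM
    have h2 : (M : ℝ) * (ε / 3) ≤ n * (ε / 3) := by gcongr
    linarith
  rw [Real.dist_eq, sub_zero, abs_of_nonneg (Real.iSup_nonneg fun _ => abs_nonneg _)]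
  linarith
end
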